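/- Let k > 0 and λ₀' > 0 and set r̃ = (π/4)·min{ |k² − λ₀'²|^{−1/2}, 1/λ₀' } (with the first entry omitted if k² = λ₀'²). Define ψ₀ on the lower half ball B⁻_{r̃}(0) ⊂ ℝ³ by: ψ₀(y₁,y₂,y₃) = 8 cosh(|λ₀'² − k²|^{1/2} y₁)(sin(λ₀' y₃) + i cos(λ₀' y₃)) if k² < λ₀'²; ψ₀(y₁,y₂,y₃) = 8 cos(|k² − λ₀'²|^{1/2} y₁)(sin(λ₀' y₃) + i cos(λ₀' y₃)) if k² > λ₀'²; and ψ₀(y₁,y₂,y₃) = 8 sin(λ₀' y₃) + 8i cos(λ₀' y₃) if k² = λ₀'². Then ψ₀ solves Δψ₀ + k²ψ₀ = 0 in B⁻_{r̃}(0), satisfies ∂ψ₀/∂ν + iλ₀' ψ₀ = 0 on the flat face B'_{r̃}(0) (outer normal ν = (0,0,1)), and |ψ₀(y)| ≥ 2 for every y ∈ B⁻_{r̃}(0). -/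

import Mathlib

open MeasureTheory Metric Set
open scoped NNReal

noncomputable section

abbrev E3 := EuclideanSpace ℝ (Fin 3)

/-- The lower half ball `B⁻_r(0) = {y ∈ ℝ³ : |y| < r, y₃ < 0}`. -/
def halfBallNeg (r : ℝ) : Set E3 := {y : E3 | ‖y‖ < r ∧ y 2 < 0}

/-- The flat face `B'_r(0) = {y ∈ ℝ³ : |y| < r, y₃ = 0}`. -/
def flatFace (r : ℝ) : Set E3 := {y : E3 | ‖y‖ < r ∧ y 2 = 0}

/-- `i`-th partial derivative (within a set) of a complex valued function. -/
def gradC (u : E3 → ℂ) (s : Set E3) (y : E3) (i : Fin 3) : ℂ :=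
  fderivWithin ℝ u s y (EuclideanSpace.single i 1)

/-- `|∇u|²` (within a set). -/
def gradSq (u : E3 → ℂ) (s : Set E3) (y : E3) : ℝ :=
  ∑ i : Fin 3, ‖gradC u s y i‖ ^ 2

/-- Assumptions on the matrix field `σ`: symmetry, `σ(0) = I`, `C^{0,1}` bound `Σ` on the
entries, and uniform ellipticity `½|ξ|² ≤ σξ·ξ ≤ C₁|ξ|²`. -/
def GoodSigma (σ : E3 → Matrix (Fin 3) (Fin 3) ℝ) (r Sig C₁ : ℝ) : Prop :=
  (∀ y ∈ closure (halfBallNeg r), (σ y).IsSymm) ∧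
  σ 0 = 1 ∧
  (∀ i j : Fin 3, ∀ y ∈ closure (halfBallNeg r), |σ y i j| ≤ Sig) ∧
  (∀ i j : Fin 3, ∀ y ∈ closure (halfBallNeg r), ∀ z ∈ closure (halfBallNeg r),
    |σ y i j - σ z i j| ≤ Sig * ‖y - z‖) ∧
  (∀ y ∈ closure (halfBallNeg r), ∀ ξ : E3,
    (1 / 2) * ∑ i : Fin 3, (ξ i) ^ 2 ≤ ∑ i : Fin 3, ∑ j : Fin 3, σ y i j * ξ i * ξ j ∧
    ∑ i : Fin 3, ∑ j : Fin 3, σ y i j * ξ i * ξ j ≤ C₁ * ∑ i : Fin 3, (ξ i) ^ 2)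

/-- Assumptions on `λ'`: real Lipschitz on the flat face with `C^{0,1}` bound `Λ'`. -/
def GoodLam (lam' : E3 → ℝ) (r Lam' : ℝ) : Prop :=
  (∀ y ∈ flatFace r, |lam' y| ≤ Lam') ∧
  (∀ y ∈ flatFace r, ∀ z ∈ flatFace r, |lam' y - lam' z| ≤ Lam' * ‖y - z‖)

/-- Test functions for the half-ball problems: `C¹` functions vanishing near the spherical
part of the boundary of `B⁻_r(0)`. -/
def HBTest (r : ℝ) (η : E3 → ℂ) : Prop :=
  ContDiff ℝ 1 η ∧ ∃ ρ : ℝ, 0 < ρ ∧ ρ < r ∧ ∀ y : E3, ρ ≤ ‖y‖ → η y = 0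

/-- The Laplacian of a complex-valued function on ℝ³. -/
def laplacian3 (u : E3 → ℂ) (x : E3) : ℂ :=
  ∑ i : Fin 3, iteratedFDeriv ℝ 2 u x ![EuclideanSpace.single i 1, EuclideanSpace.single i 1]

/-!
Let `σ` be a complex square root of `k² − λ₀'²`. Since `cos (iz) = cosh z`, the three formulas for
`ψ₀` are the single formula `8 cos (σ y₁) (sin (λ₀' y₃) + i cos (λ₀' y₃))`, which is `4i` times the
sum of the plane waves `exp (i (±σ y₁ − λ₀' y₃))`. Both have the eigenvalue
`−(σ² + λ₀'²) = −k²` for the Laplacian and the eigenvalue `−iλ₀'` for `∂/∂y₃`. As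
`|sin + i cos| = 1` and `|cos z| ≥ |cos (Re z)|`, the modulus is at least `8 cos (π/4)` wherever
`|σ y₁| ≤ π/4`, and the choice of `r̃` ensures `|σ| r̃ ≤ π/4`.
-/

section PlaneWave

open Complex Laplacian

section NormedSpace

variable {E : Type*} [NormedAddCommGroup E] [NormedSpace ℝ E] (L : E →L[ℝ] ℂ)

lemma fderiv_cexp_clm : fderiv ℝ (fun x => cexp (L x)) = fun x => cexp (L x) • L :=
  funext fun _ => L.hasFDerivAt.cexp.fderiv

lemma iteratedFDeriv_two_cexp_clm (x : E) (m : Fin 2 → E) :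
    iteratedFDeriv ℝ 2 (fun x => cexp (L x)) x m = L (m 0) * L (m 1) * cexp (L x) := by
  have hderiv : HasFDerivAt (fun x => cexp (L x) • L) ((cexp (L x) • L).smulRight L) x :=
    L.hasFDerivAt.cexp.smul_const L
  rw [iteratedFDeriv_two_apply, fderiv_cexp_clm, hderiv.fderiv]
  simp only [ContinuousLinearMap.smulRight_apply, smul_apply, smul_eq_mul]
  ring

end NormedSpace

lemma laplacian_cexp_clm {ι E : Type*} [Fintype ι] [NormedAddCommGroup E] [InnerProductSpace ℝ E]
    [FiniteDimensional ℝ E] (b : OrthonormalBasis ι ℝ E) (L : E →L[ℝ] ℂ) (x : E) :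
    Δ (fun x => cexp (L x)) x = (∑ i, L (b i) ^ 2) * cexp (L x) := by
  rw [InnerProductSpace.laplacian_eq_iteratedFDeriv_orthonormalBasis _ b, Finset.sum_mul]
  simp [iteratedFDeriv_two_cexp_clm, sq]

section EuclideanSpace

variable {ι : Type*} [Fintype ι] (ζ : ι → ℂ)

/-- The linear form `y ↦ ∑ i, ζ i * y i` with complex coefficients on real Euclidean space, the
exponent of `planeWave ζ`. -/
def waveForm : EuclideanSpace ℝ ι →L[ℝ] ℂ :=
  ∑ i, ζ i • ofRealCLM.comp (EuclideanSpace.proj i)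

lemma waveForm_apply (y : EuclideanSpace ℝ ι) : waveForm ζ y = ∑ i, ζ i * y i := by
  simp [waveForm]

lemma waveForm_single [DecidableEq ι] (i : ι) : waveForm ζ (EuclideanSpace.single i 1) = ζ i := by
  simp [waveForm_apply, apply_ite ((↑) : ℝ → ℂ)]

/-- The complex plane wave `exp (ζ · y)`. The factor `i` is part of `ζ`, so that an oscillating
wave has imaginary `ζ`. -/
def planeWave (y : EuclideanSpace ℝ ι) : ℂ := cexp (waveForm ζ y)

lemma contDiff_planeWave {n : WithTop ℕ∞} : ContDiff ℝ n (planeWave ζ) :=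
  (waveForm ζ).contDiff.cexp

lemma fderiv_planeWave_single [DecidableEq ι] (i : ι) (y : EuclideanSpace ℝ ι) :
    fderiv ℝ (planeWave ζ) y (EuclideanSpace.single i 1) = ζ i * planeWave ζ y := by
  unfold planeWave
  rw [fderiv_cexp_clm, smul_apply, waveForm_single, smul_eq_mul, mul_comm]

lemma laplacian_planeWave (y : EuclideanSpace ℝ ι) :
    Δ (planeWave ζ) y = (∑ i, ζ i ^ 2) * planeWave ζ y := by
  classical
  unfold planeWave
  simpa only [EuclideanSpace.basisFun_apply, waveForm_single] using
    laplacian_cexp_clm (EuclideanSpace.basisFun ι ℝ) (waveForm ζ) y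

end EuclideanSpace

end PlaneWave

section RobinMode

open Complex Laplacian

lemma laplacian3_eq_laplacian (u : E3 → ℂ) : laplacian3 u = Δ u := by
  rw [InnerProductSpace.laplacian_eq_iteratedFDeriv_orthonormalBasis u
    (EuclideanSpace.basisFun (Fin 3) ℝ)]
  simp [funext_iff, laplacian3]

/-- The separated solution of `Δψ + (σ² + l²)ψ = 0` with Robin condition `∂ψ/∂y₃ + ilψ = 0`.
The transverse wave number `σ` is complex so that imaginary `σ` gives the `cosh` profile. -/
def robinMode (σ l : ℂ) (y : E3) : ℂ :=
  8 * cos (σ * y 0) * (sin (l * y 2) + I * cos (l * y 2))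

section ComplexRobinParameter

variable (σ l : ℂ)

lemma robinMode_eq_smul_planeWave_add_planeWave :
    robinMode σ l =
      (4 * I) • (planeWave ![I * σ, 0, -I * l] + planeWave ![-I * σ, 0, -I * l]) := by
  funext y
  have hrobin : sin (l * y 2) + I * cos (l * y 2) = I * cexp (-I * l * y 2) := by
    rw [show -I * l * y 2 = -(l * y 2) * I by ring, ← cos_add_sin_I, cos_neg, sin_neg]
    linear_combination sin (l * y 2) * I_sq
  have htransverse : 2 * cos (σ * y 0) = cexp (I * σ * y 0) + cexp (-I * σ * y 0) := by
    rw [two_cos]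
    ring_nf
  simp only [robinMode, hrobin, Pi.smul_apply, Pi.add_apply, smul_eq_mul, planeWave,
    waveForm_apply, Fin.sum_univ_three, Matrix.cons_val, zero_mul, add_zero, exp_add]
  linear_combination 4 * I * cexp (-I * l * y 2) * htransverse

lemma laplacian3_robinMode (y : E3) :
    laplacian3 (robinMode σ l) y = -(σ ^ 2 + l ^ 2) * robinMode σ l y := by
  have hdiff (ζ : Fin 3 → ℂ) : ContDiffAt ℝ 2 (planeWave ζ) y :=
    (contDiff_planeWave ζ).contDiffAt
  have hsum (ζ ζ' : Fin 3 → ℂ) : ContDiffAt ℝ 2 (planeWave ζ + planeWave ζ') y :=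
    (hdiff ζ).add (hdiff ζ')
  rw [laplacian3_eq_laplacian, robinMode_eq_smul_planeWave_add_planeWave,
    InnerProductSpace.laplacian_smul _ (hsum _ _), (hdiff _).laplacian_add (hdiff _)]
  simp only [laplacian_planeWave, Fin.sum_univ_three, Matrix.cons_val, mul_pow, neg_sq, I_sq,
    Pi.smul_apply, Pi.add_apply, smul_eq_mul]
  ring

lemma fderiv_robinMode_single_two (y : E3) :
    fderiv ℝ (robinMode σ l) y (EuclideanSpace.single 2 1) = -(I * l * robinMode σ l y) := by
  have hdiff (ζ : Fin 3 → ℂ) : DifferentiableAt ℝ (planeWave ζ) y :=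
    (contDiff_planeWave ζ).differentiable one_ne_zero y
  rw [robinMode_eq_smul_planeWave_add_planeWave,
    fderiv_const_smul ((hdiff _).add (hdiff _)), fderiv_add (hdiff _) (hdiff _)]
  simp only [smul_apply, add_apply, fderiv_planeWave_single, Matrix.cons_val, Pi.smul_apply,
    Pi.add_apply, smul_eq_mul]
  ring

end ComplexRobinParameter

lemma norm_robinMode (σ : ℂ) (l : ℝ) (y : E3) : ‖robinMode σ l y‖ = 8 * ‖cos (σ * y 0)‖ := by
  have hunit : ‖sin (l * y 2) + I * cos (l * y 2)‖ = 1 := by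
    rw [← ofReal_mul, ← ofReal_sin, ← ofReal_cos, mul_comm I, norm_add_mul_I,
      Real.sin_sq_add_cos_sq, Real.sqrt_one]
  rw [robinMode, norm_mul, hunit, mul_one, norm_mul, norm_ofNat]

end RobinMode

lemma abs_cos_re_le_norm_cos (z : ℂ) : |Real.cos z.re| ≤ ‖Complex.cos z‖ := by
  have hre : (Complex.cos z).re = Real.cos z.re * Real.cosh z.im := by
    rw [Complex.cos_eq]
    simp [← Complex.ofReal_cos, ← Complex.ofReal_sin, ← Complex.ofReal_cosh, ← Complex.ofReal_sinh]
  calc |Real.cos z.re| ≤ |Real.cos z.re| * Real.cosh z.im :=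
        le_mul_of_one_le_right (abs_nonneg _) (Real.one_le_cosh _)
    _ = |(Complex.cos z).re| := by rw [hre, abs_mul, abs_of_pos (Real.cosh_pos _)]
    _ ≤ ‖Complex.cos z‖ := Complex.abs_re_le_norm _

lemma sqrt_two_div_two_le_norm_cos {z : ℂ} (hz : |z.re| ≤ Real.pi / 4) :
    √2 / 2 ≤ ‖Complex.cos z‖ :=
  calc √2 / 2 = Real.cos (Real.pi / 4) := Real.cos_pi_div_four.symm
    _ ≤ Real.cos |z.re| :=
        Real.cos_le_cos_of_nonneg_of_le_pi (abs_nonneg _) (by linarith [Real.pi_pos]) hz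
    _ ≤ |Real.cos z.re| := (Real.cos_abs _).trans_le (le_abs_self _)
    _ ≤ ‖Complex.cos z‖ := abs_cos_re_le_norm_cos z

lemma four_mul_sqrt_two_le_norm_robinMode {σ : ℂ} {l r : ℝ} {y : E3} (hσ : ‖σ‖ * r ≤ Real.pi / 4)
    (hy : ‖y‖ ≤ r) : 4 * √2 ≤ ‖robinMode σ l y‖ := by
  have hphase : |(σ * y 0).re| ≤ Real.pi / 4 :=
    calc |(σ * y 0).re| ≤ ‖σ‖ * ‖y 0‖ := by
          simpa using Complex.abs_re_le_norm (σ * y 0)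
      _ ≤ ‖σ‖ * r := by gcongr; exact (PiLp.norm_apply_le y 0).trans hy
      _ ≤ Real.pi / 4 := hσ
  rw [norm_robinMode]
  linarith [sqrt_two_div_two_le_norm_cos hphase]

lemma exists_sq_eq_sub_and_cos_mul (a b : ℝ) :
    ∃ σ : ℂ, σ ^ 2 = a - b ∧ ∀ t : ℝ, Complex.cos (σ * t) =
      if a < b then (Real.cosh (√(b - a) * t) : ℂ)
      else if b < a then (Real.cos (√(a - b) * t) : ℂ) else 1 := by
  rcases lt_trichotomy a b with h | rfl | h
  · refine ⟨√(b - a) * Complex.I, ?_, fun t => ?_⟩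
    · rw [mul_pow, Complex.I_sq, ← Complex.ofReal_pow, Real.sq_sqrt (sub_nonneg.2 h.le)]
      push_cast
      ring
    · rw [if_pos h, mul_right_comm, Complex.cos_mul_I]
      push_cast
      rfl
  · exact ⟨0, by simp, by simp⟩
  · refine ⟨√(a - b), ?_, fun t => ?_⟩
    · rw [← Complex.ofReal_pow, Real.sq_sqrt (sub_nonneg.2 h.le)]
      push_cast
      rfl
    · rw [if_neg h.not_gt, if_pos h]
      push_cast
      rfl

lemma abs_rpow_neg_half_eq_inv_norm {σ : ℂ} {d : ℝ} (hσ : σ ^ 2 = d) :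
    |d| ^ (-(1 / 2 : ℝ)) = ‖σ‖⁻¹ := by
  have hd : |d| = ‖σ‖ ^ 2 := by rw [← norm_pow, hσ, Complex.norm_real, Real.norm_eq_abs]
  rw [hd, Real.rpow_neg (sq_nonneg _), ← Real.sqrt_eq_rpow, Real.sqrt_sq (norm_nonneg _)]

lemma norm_mul_min_abs_rpow_neg_half_le {σ : ℂ} {d c m : ℝ} (hσ : σ ^ 2 = d) (hc : 0 ≤ c) :
    ‖σ‖ * (c * min (|d| ^ (-(1 / 2 : ℝ))) m) ≤ c :=
  calc ‖σ‖ * (c * min (|d| ^ (-(1 / 2 : ℝ))) m) ≤ ‖σ‖ * (c * ‖σ‖⁻¹) := by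
        rw [abs_rpow_neg_half_eq_inv_norm hσ]
        gcongr
        exact min_le_left _ _
    _ = c * (‖σ‖ * ‖σ‖⁻¹) := by ring
    _ ≤ c := mul_le_of_le_one_right hc mul_inv_le_one

/-- **The explicit constant-coefficient half-ball solution `ψ₀`.**
With `r̃ = (π/4) min{|k² − λ₀'²|^{-1/2}, 1/λ₀'}` (first entry omitted when `k² = λ₀'²`),
the explicitly defined `ψ₀` solves `Δψ₀ + k²ψ₀ = 0` in `B⁻_{r̃}(0)`, satisfies
`∂ψ₀/∂ν + iλ₀'ψ₀ = 0` on the flat face, and `|ψ₀| ≥ 2` on `B⁻_{r̃}(0)`. -/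
theorem explicit_halfball_solution
    (k l0 rt : ℝ) (ψ₀ : E3 → ℂ)
    (hk : 0 < k) (hl0 : 0 < l0)
    (hrt : rt = if k ^ 2 = l0 ^ 2 then (Real.pi / 4) * (1 / l0)
      else (Real.pi / 4) * min (|k ^ 2 - l0 ^ 2| ^ (-(1 / 2 : ℝ))) (1 / l0))
    (hψ₀ : ψ₀ = fun y : E3 =>
      if k ^ 2 < l0 ^ 2 then
        (8 : ℂ) * (Real.cosh (Real.sqrt (l0 ^ 2 - k ^ 2) * y 0) : ℂ) *
          ((Real.sin (l0 * y 2) : ℂ) + Complex.I * (Real.cos (l0 * y 2) : ℂ))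
      else if l0 ^ 2 < k ^ 2 then
        (8 : ℂ) * (Real.cos (Real.sqrt (k ^ 2 - l0 ^ 2) * y 0) : ℂ) *
          ((Real.sin (l0 * y 2) : ℂ) + Complex.I * (Real.cos (l0 * y 2) : ℂ))
      else
        (8 : ℂ) * (Real.sin (l0 * y 2) : ℂ) + (8 : ℂ) * Complex.I * (Real.cos (l0 * y 2) : ℂ)) :
    (∀ y ∈ halfBallNeg rt, laplacian3 ψ₀ y + (k : ℂ) ^ 2 * ψ₀ y = 0) ∧
    (∀ y ∈ flatFace rt,
      fderiv ℝ ψ₀ y (EuclideanSpace.single 2 1) + Complex.I * (l0 : ℂ) * ψ₀ y = 0) ∧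
    (∀ y ∈ halfBallNeg rt, (2 : ℝ) ≤ ‖ψ₀ y‖) := by
  obtain ⟨σ, hσ, hcos⟩ := exists_sq_eq_sub_and_cos_mul (k ^ 2) (l0 ^ 2)
  obtain rfl : ψ₀ = robinMode σ l0 := by
    rw [hψ₀]
    funext y
    simp only [robinMode, hcos]
    split_ifs <;> push_cast <;> ring
  have hdispersion : σ ^ 2 + (l0 : ℂ) ^ 2 = (k : ℂ) ^ 2 := by
    rw [hσ]
    push_cast
    ring
  have hradius : ‖σ‖ * rt ≤ Real.pi / 4 := by
    rw [hrt]
    split_ifs with h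
    · have hσ_zero : σ = 0 := by simpa [h] using hσ
      rw [hσ_zero, norm_zero, zero_mul]
      positivity
    · exact norm_mul_min_abs_rpow_neg_half_le (by exact_mod_cast hσ) (by positivity)
  refine ⟨fun y _ => ?_, fun y _ => ?_, fun y hy => ?_⟩
  · rw [laplacian3_robinMode, hdispersion, neg_mul, neg_add_cancel]
  · rw [fderiv_robinMode_single_two, neg_add_cancel]
  · linarith [four_mul_sqrt_two_le_norm_robinMode (l := l0) hradius hy.1.le, Real.one_lt_sqrt_two]

end
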